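/- The restriction of f to W is a semisimple endomorphism of W (every f-invariant subspace of W has an f-invariant complement in W; equivalently, f|_W is diagonalizable). Moreover W is the sum of the eigenspaces of f for the eigenvalues of the form ζc with ζ ∈ K a root of unity: W = ∑_{ζ root of unity} ker(f − ζc·id). -/

import Mathlib

theorem aux_pow_apply {K V : Type*} [Field K] [AddCommGroup V] [Module K V]
    (f : V →ₗ[K] V) (a : K) (x : V) (h : f x = a • x) (k : ℕ) : (f ^ k) x = a ^ k • x := by
  induction k with
  | zero => simp
  | succ k ih => rw [pow_succ, Module.End.mul_apply, h, map_smul, ih, smul_smul, pow_succ, mul_comm]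

/-- Let `K` be an algebraically closed field of characteristic zero, `V` a
finite-dimensional `K`-vector space, `f` an endomorphism of `V` and `c ≠ 0` a scalar.  Let
`W = {x : ∃ n ≥ 1, fⁿ x = cⁿ x}`, an `f`-invariant subspace.  Then the restriction of `f`
to `W` is a semisimple endomorphism of `W` (equivalently, diagonalizable), and `W` is the
sum of the eigenspaces of `f` for the eigenvalues `ζ·c` with `ζ` a root of unity. -/
theorem isSemisimple_restrict_and_eq_sup_eigenspaces (K : Type*) [Field K] [IsAlgClosed K]
    [CharZero K] (V : Type*) [AddCommGroup V] [Module K V] [FiniteDimensional K V]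
    (f : V →ₗ[K] V) (c : K) (hc : c ≠ 0) (W : Submodule K V)
    (hW : (W : Set V) = {x : V | ∃ n : ℕ, 1 ≤ n ∧ (f ^ n) x = c ^ n • x})
    (hfW : ∀ x ∈ W, f x ∈ W) :
    Module.End.IsSemisimple (LinearMap.restrict f hfW) ∧
    W = ⨆ ζ ∈ {ζ : K | ∃ m : ℕ, 1 ≤ m ∧ ζ ^ m = 1},
          Module.End.eigenspace f (ζ * c) := by
  have hmem : ∀ x : V, x ∈ W ↔ ∃ n : ℕ, 1 ≤ n ∧ (f ^ n) x = c ^ n • x := fun x => by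
    rw [← SetLike.mem_coe, hW]; rfl
  set g : Module.End K W := LinearMap.restrict f hfW with hg
  have hgv : ∀ x : W, ((g x : W) : V) = f x := fun x => rfl
  have hgp : ∀ (n : ℕ) (x : W), (((g ^ n) x : W) : V) = (f ^ n) x := by
    intro n
    induction n with
    | zero => intro x; simp
    | succ n ih => intro x; rw [pow_succ, pow_succ, Module.End.mul_apply, Module.End.mul_apply, ih, hgv]
  obtain ⟨N, hN, hgN⟩ : ∃ N : ℕ, N ≠ 0 ∧ ∀ x : W, (g ^ N) x = c ^ N • x := by
    let b := Module.finBasis K W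
    choose n hn1 hn using fun i => (hmem (b i)).1 (b i).2
    refine ⟨∏ i, n i, Finset.prod_ne_zero_iff.2 fun i _ => by have := hn1 i; omega, ?_⟩
    have : g ^ (∏ i, n i) = c ^ (∏ i, n i) • (LinearMap.id : W →ₗ[K] W) := by
      refine b.ext fun i => ?_
      obtain ⟨k, hk⟩ := Finset.dvd_prod_of_mem n (Finset.mem_univ i)
      rw [hk]
      apply Subtype.ext
      rw [hgp, pow_mul, aux_pow_apply _ _ _ (hn i), pow_mul]
      rfl
    intro x
    rw [this]; rfl
  have hss : g.IsSemisimple := by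
    refine Module.End.isSemisimple_of_squarefree_aeval_eq_zero
      (p := Polynomial.X ^ N - Polynomial.C (c ^ N)) ?_ ?_
    · exact (Polynomial.separable_X_pow_sub_C _ (by exact_mod_cast hN) (pow_ne_zero _ hc)).squarefree
    · ext1 x
      rw [map_sub, map_pow, Polynomial.aeval_X, Polynomial.aeval_C, LinearMap.sub_apply, hgN,
        Module.algebraMap_end_apply, sub_self, LinearMap.zero_apply]
  refine ⟨hss, le_antisymm ?_ ?_⟩
  · have htop := hss.iSup_eigenspace_eq_top
    rw [← W.range_subtype, ← Submodule.map_top, ← htop, Submodule.map_iSup]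
    refine iSup_le fun μ => ?_
    rintro _ ⟨x, hx, rfl⟩
    by_cases hx0 : x = 0
    · subst hx0; simp
    have hx' : g x = μ • x := Module.End.mem_eigenspace_iff.1 hx
    have h1 := aux_pow_apply g μ x hx' N
    rw [hgN] at h1
    have h2 : c ^ N = μ ^ N := smul_left_injective K hx0 h1
    refine Submodule.mem_iSup_of_mem (μ / c) (Submodule.mem_iSup_of_mem
      ⟨N, Nat.one_le_iff_ne_zero.2 hN, ?_⟩ ?_)
    · rw [div_pow, ← h2, div_self (pow_ne_zero _ hc)]
    · rw [div_mul_cancel₀ _ hc, Module.End.mem_eigenspace_iff]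
      exact congrArg Subtype.val hx'
  · refine iSup₂_le ?_
    rintro ζ ⟨m, hm, hζ⟩ x hx
    refine (hmem x).2 ⟨m, hm, ?_⟩
    rw [aux_pow_apply f _ x (Module.End.mem_eigenspace_iff.1 hx), mul_pow, hζ, one_mul]
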